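/- Let δ ≥ e and s > 0 be real numbers. Then δ^{1−s}/ln δ + s·δ ≤ (δ/(e·ln δ))·(e^{δ^{−s}}/δ^{−s}). -/

import Mathlib

/-! With `z = δ ^ (-s)`, so that `log z = -s * log δ`, dividing the inequality by the positive
factor `δ / log δ` turns it into `z - log z ≤ exp (z - 1) / z`. The right-hand side is
`exp (z - log z - 1)`, so this is `x ≤ exp (x - 1)` at `x = z - log z`. -/

theorem sub_log_le_exp_sub_one_div {z : ℝ} (hz : 0 < z) :
    z - Real.log z ≤ Real.exp (z - 1) / z :=
  calc z - Real.log z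
    _ = (z - 1 - Real.log z) + 1 := by ring
    _ ≤ Real.exp (z - 1 - Real.log z) := Real.add_one_le_exp _
    _ = Real.exp (z - 1) / z := by rw [Real.exp_sub, Real.exp_log hz]

theorem rpow_one_sub_div_log_add_mul {δ : ℝ} (hδ : 0 < δ) (hδ_log : Real.log δ ≠ 0) (s : ℝ) :
    δ ^ (1 - s) / Real.log δ + s * δ =
      δ / Real.log δ * (δ ^ (-s) - Real.log (δ ^ (-s))) := by
  have rpow_split : δ ^ (1 - s) = δ * δ ^ (-s) := by
    rw [sub_eq_add_neg, Real.rpow_add hδ, Real.rpow_one]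
  rw [rpow_split, Real.log_rpow hδ]
  field_simp
  ring

theorem rand_rob3_final_general (δ s : ℝ) (hδ : 1 < δ) :
    δ ^ (1 - s) / Real.log δ + s * δ ≤
      δ / (Real.exp 1 * Real.log δ) * (Real.exp (δ ^ (-s)) / δ ^ (-s)) := by
  have hδ_pos : 0 < δ := one_pos.trans hδ
  have hlog_pos : 0 < Real.log δ := Real.log_pos hδ
  calc δ ^ (1 - s) / Real.log δ + s * δ
    _ = δ / Real.log δ * (δ ^ (-s) - Real.log (δ ^ (-s))) :=
      rpow_one_sub_div_log_add_mul hδ_pos hlog_pos.ne' s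
    _ ≤ δ / Real.log δ * (Real.exp (δ ^ (-s) - 1) / δ ^ (-s)) := by
      gcongr
      exact sub_log_le_exp_sub_one_div (Real.rpow_pos_of_pos hδ_pos _)
    _ = δ / (Real.exp 1 * Real.log δ) * (Real.exp (δ ^ (-s)) / δ ^ (-s)) := by
      rw [Real.exp_sub]
      ring

theorem rand_rob3_final (δ s : ℝ) (hδ : Real.exp 1 ≤ δ) (hs : 0 < s) :
    δ ^ (1 - s) / Real.log δ + s * δ ≤
      δ / (Real.exp 1 * Real.log δ) * (Real.exp (δ ^ (-s)) / δ ^ (-s)) :=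
  rand_rob3_final_general δ s ((Real.one_lt_exp_iff.2 one_pos).trans_le hδ)
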